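/- Let R > 0 and let h : [0,R) → ℝ be twice continuously differentiable satisfying assumptions (A1)–(A3), with t* the smallest zero of h in (0,R). Define the sequence (t_k) by t_0 = 0 and t_{k+1} = H_h(t_k) = t_k − (1/(1 − L_h(t_k)))·(h(t_k)/h'(t_k)). Then (t_k) is well defined, strictly increasing, contained in [0,t*), converges to t*, and satisfies the Q-cubic estimate t* − t_{k+1} ≤ [ (1/3)·h''(t*)²/h'(t*)² + (2/9)·D⁻h''(t*)/(−h'(t*)) ]·(t* − t_k)³ for all k. -/

import Mathlib

/-!
At a point `x < z` to the left of the root, monotonicity and convexity of `f''` trap `f''` on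
`[x, z]` between the constant `f'' x` and its chord. Integrating twice traps `f x` between
`-f' x (z - x) - f'' x (z - x)² / 2` and the same quantity minus `(f'' z - f'' x) (z - x)² / 6`.
The Halley step is an explicit function of `f x`, `f' x`, `f'' x`: the upper bound on `f x` keeps
its denominator away from `0` and prevents it from overshooting `z`, and the lower bound gives the
cubic error. Since `f x ≥ -f' z (z - x)`, each step covers a fixed proportion of the remaining
distance, which forces convergence to `z`.
-/

open Set Filter Topology

section Comparison

variable {f f' f'' g g' g'' : ℝ → ℝ} {a b : ℝ}

lemma image_le_of_hasDerivWithinAt_le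
    (hf : ∀ u ∈ Icc a b, HasDerivWithinAt f (f' u) (Icc a b) u)
    (hg : ∀ u ∈ Icc a b, HasDerivWithinAt g (g' u) (Icc a b) u)
    (ha : f a ≤ g a) (hle : ∀ u ∈ Icc a b, f' u ≤ g' u) : ∀ u ∈ Icc a b, f u ≤ g u :=
  image_le_of_deriv_right_le_deriv_boundary
    (fun u hu => (hf u hu).continuousWithinAt)
    (fun u hu => (hf u (Ico_subset_Icc_self hu)).mono_of_mem_nhdsWithin
      (Icc_mem_nhdsGE_of_mem hu))
    ha (fun u hu => (hg u hu).continuousWithinAt)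
    (fun u hu => (hg u (Ico_subset_Icc_self hu)).mono_of_mem_nhdsWithin
      (Icc_mem_nhdsGE_of_mem hu))
    (fun u hu => hle u (Ico_subset_Icc_self hu))

lemma image_le_of_hasDerivWithinAt2_le
    (hf : ∀ u ∈ Icc a b, HasDerivWithinAt f (f' u) (Icc a b) u)
    (hf' : ∀ u ∈ Icc a b, HasDerivWithinAt f' (f'' u) (Icc a b) u)
    (hg : ∀ u ∈ Icc a b, HasDerivWithinAt g (g' u) (Icc a b) u)
    (hg' : ∀ u ∈ Icc a b, HasDerivWithinAt g' (g'' u) (Icc a b) u)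
    (ha : f a ≤ g a) (ha' : f' a ≤ g' a) (hle : ∀ u ∈ Icc a b, f'' u ≤ g'' u) :
    ∀ u ∈ Icc a b, f u ≤ g u :=
  image_le_of_hasDerivWithinAt_le hf hg ha
    (image_le_of_hasDerivWithinAt_le hf' hg' ha' hle)

lemma hasDerivAt_affine_sub (c₀ c₁ a u : ℝ) :
    HasDerivAt (fun v => c₀ + c₁ * (v - a)) c₁ u := by
  simpa using (((hasDerivAt_id u).sub_const a).const_mul c₁).const_add c₀

lemma hasDerivAt_quadratic_sub (c₀ c₁ c₂ a u : ℝ) :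
    HasDerivAt (fun v => c₀ + c₁ * (v - a) + c₂ / 2 * (v - a) ^ 2) (c₁ + c₂ * (u - a)) u :=
  ((hasDerivAt_affine_sub c₀ c₁ a u).fun_add
    ((((hasDerivAt_id' u).sub_const a).fun_pow 2).const_mul (c₂ / 2))).congr_deriv (by ring)

lemma hasDerivAt_cubic_sub (c₀ c₁ c₂ c₃ a u : ℝ) :
    HasDerivAt (fun v => c₀ + c₁ * (v - a) + c₂ / 2 * (v - a) ^ 2 + c₃ / 6 * (v - a) ^ 3)
      (c₁ + c₂ * (u - a) + c₃ / 2 * (u - a) ^ 2) u :=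
  ((hasDerivAt_quadratic_sub c₀ c₁ c₂ a u).fun_add
    ((((hasDerivAt_id' u).sub_const a).fun_pow 3).const_mul (c₃ / 6))).congr_deriv (by ring)

lemma quadratic_le_of_le_deriv2 {m : ℝ}
    (hf : ∀ u ∈ Icc a b, HasDerivWithinAt f (f' u) (Icc a b) u)
    (hf' : ∀ u ∈ Icc a b, HasDerivWithinAt f' (f'' u) (Icc a b) u)
    (hm : ∀ u ∈ Icc a b, m ≤ f'' u) :
    ∀ u ∈ Icc a b, f a + f' a * (u - a) + m / 2 * (u - a) ^ 2 ≤ f u :=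
  image_le_of_hasDerivWithinAt2_le
    (fun u _ => (hasDerivAt_quadratic_sub _ _ _ a u).hasDerivWithinAt)
    (fun u _ => (hasDerivAt_affine_sub _ _ a u).hasDerivWithinAt)
    hf hf' (by simp) (by simp) hm

lemma le_cubic_of_deriv2_le {m D : ℝ}
    (hf : ∀ u ∈ Icc a b, HasDerivWithinAt f (f' u) (Icc a b) u)
    (hf' : ∀ u ∈ Icc a b, HasDerivWithinAt f' (f'' u) (Icc a b) u)
    (hD : ∀ u ∈ Icc a b, f'' u ≤ m + D * (u - a)) :
    ∀ u ∈ Icc a b,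
      f u ≤ f a + f' a * (u - a) + m / 2 * (u - a) ^ 2 + D / 6 * (u - a) ^ 3 :=
  image_le_of_hasDerivWithinAt2_le hf hf'
    (fun u _ => (hasDerivAt_cubic_sub _ _ _ _ a u).hasDerivWithinAt)
    (fun u _ => (hasDerivAt_quadratic_sub _ _ _ a u).hasDerivWithinAt)
    (by simp) (by simp) hD

end Comparison

section Convex

variable {g : ℝ → ℝ} {a b : ℝ}

lemma le_chord_of_convexOn_Icc (hg : ConvexOn ℝ (Icc a b) g) :
    ∀ u ∈ Icc a b, g u ≤ g a + (g b - g a) / (b - a) * (u - a) := by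
  intro u hu
  rcases hu.1.eq_or_lt with rfl | hau
  · simp
  have hab : a < b := hau.trans_le hu.2
  have hslope := hg.secant_mono (left_mem_Icc.2 hab.le) hu (right_mem_Icc.2 hab.le)
    hau.ne' hab.ne' hu.2
  rw [div_le_iff₀ (sub_pos.2 hau)] at hslope
  linarith

/-- The left derivative `D⁻g(b)` of a function convex on `[a, b]`, encoded as the supremum of the
slopes of its chords from points of `[a, b)` to `b`. It takes the junk value `0` when these slopes
are unbounded. -/
noncomputable def leftSlopeSup (g : ℝ → ℝ) (a b : ℝ) : ℝ :=
  sSup ((fun u => (g b - g u) / (b - u)) '' Ico a b)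

lemma sub_le_leftSlopeSup_mul {R u : ℝ} (hg : ConvexOn ℝ (Ico a R) g) (hb : b < R)
    (hu : u ∈ Ico a b) : g b - g u ≤ leftSlopeSup g a b * (b - u) := by
  obtain ⟨r, hbr, hrR⟩ := exists_between hb
  have hbdd : BddAbove ((fun u => (g b - g u) / (b - u)) '' Ico a b) := by
    refine ⟨(g r - g b) / (r - b), ?_⟩
    rintro _ ⟨v, hv, rfl⟩
    exact hg.slope_mono_adjacent ⟨hv.1, hv.2.trans hb⟩
      ⟨hv.1.trans (hv.2.trans hbr).le, hrR⟩ hv.2 hbr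
  rw [← div_le_iff₀ (sub_pos.2 hu.2)]
  exact le_csSup hbdd (mem_image_of_mem _ hu)

end Convex

lemma tendsto_of_mul_sub_le_sub {t : ℕ → ℝ} {z c : ℝ} (hc : 0 < c) (hle : ∀ k, t k ≤ z)
    (hstep : ∀ k, c * (z - t k) ≤ t (k + 1) - t k) : Tendsto t atTop (𝓝 z) := by
  have hmono : Monotone t := monotone_nat_of_le_succ fun k => by
    linarith [hstep k, mul_nonneg hc.le (sub_nonneg.2 (hle k))]
  have hlim := tendsto_atTop_ciSup hmono ⟨z, forall_mem_range.2 hle⟩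
  have hgap : c * (z - ⨆ k, t k) ≤ (⨆ k, t k) - ⨆ k, t k :=
    le_of_tendsto_of_tendsto' ((hlim.const_sub z).const_mul c)
      (((tendsto_add_atTop_iff_nat 1).2 hlim).sub hlim) hstep
  have hzl : z ≤ ⨆ k, t k := by
    rw [sub_self] at hgap
    exact sub_nonpos.1 (nonpos_of_mul_nonpos_right hgap hc)
  rwa [(ciSup_le hle).antisymm hzl] at hlim

/-- The Halley iteration function `H_f(x) = x - (1 / (1 - L_f(x))) (f(x) / f'(x))` with
`L_f(x) = f(x) f''(x) / (2 f'(x)²)`, where the derivatives of `f` are passed as `f'` and `f''`. -/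
noncomputable def halleyMap (f f' f'' : ℝ → ℝ) (x : ℝ) : ℝ :=
  x - 1 / (1 - f x * f'' x / (2 * f' x ^ 2)) * (f x / f' x)

lemma halleyMap_eq_sub_div {f f' f'' : ℝ → ℝ} {x : ℝ} (hx : f' x ≠ 0) :
    halleyMap f f' f'' x = x - 2 * f x * f' x / (2 * f' x ^ 2 - f x * f'' x) := by
  have hL : 1 - f x * f'' x / (2 * f' x ^ 2) =
      (2 * f' x ^ 2 - f x * f'' x) / (2 * f' x ^ 2) := by
    field_simp
  rw [halleyMap, hL, one_div_div, div_mul_div_comm, mul_comm _ (f' x),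
    show 2 * f' x ^ 2 * f x = f' x * (2 * f x * f' x) by ring, mul_div_mul_left _ _ hx]

/-- A majorizing function on `[a, z]` in Halley's method: `f` has derivatives `f'` and `f''`, the
latter positive, nondecreasing and convex, and `f` crosses zero downwards at `z`. Only the interval
`[a, z]` traversed by the iteration is recorded, so that `a` can be moved to the current iterate. -/
structure IsHalleyMajorant (f f' f'' : ℝ → ℝ) (a z : ℝ) : Prop where
  lt : a < z
  hasDeriv : ∀ u ∈ Icc a z, HasDerivWithinAt f (f' u) (Icc a z) u
  hasDeriv2 : ∀ u ∈ Icc a z, HasDerivWithinAt f' (f'' u) (Icc a z) u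
  deriv2_pos : 0 < f'' a
  monotoneOn : MonotoneOn f'' (Icc a z)
  convexOn : ConvexOn ℝ (Icc a z) f''
  root : f z = 0
  deriv_root_neg : f' z < 0

namespace IsHalleyMajorant

variable {f f' f'' : ℝ → ℝ} {a x z : ℝ}

lemma of_Ico {R : ℝ} (hf : ∀ u ∈ Ico a R, HasDerivWithinAt f (f' u) (Ico a R) u)
    (hf' : ∀ u ∈ Ico a R, HasDerivWithinAt f' (f'' u) (Ico a R) u)
    (hpos : 0 < f'' a) (hmono : MonotoneOn f'' (Ico a R)) (hconv : ConvexOn ℝ (Ico a R) f'')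
    (hz : z ∈ Ioo a R) (hroot : f z = 0) (hneg : f' z < 0) :
    IsHalleyMajorant f f' f'' a z :=
  have hsub : Icc a z ⊆ Ico a R := Icc_subset_Ico_right hz.2
  { lt := hz.1
    hasDeriv := fun u hu => (hf u (hsub hu)).mono hsub
    hasDeriv2 := fun u hu => (hf' u (hsub hu)).mono hsub
    deriv2_pos := hpos
    monotoneOn := hmono.mono hsub
    convexOn := hconv.subset hsub (convex_Icc a z)
    root := hroot
    deriv_root_neg := hneg }

lemma deriv2_le (hf : IsHalleyMajorant f f' f'' a z) : ∀ u ∈ Icc a z, f'' a ≤ f'' u :=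
  fun _ hu => hf.monotoneOn (left_mem_Icc.2 hf.lt.le) hu hu.1

lemma restrict (hf : IsHalleyMajorant f f' f'' a z) (hx : x ∈ Ico a z) :
    IsHalleyMajorant f f' f'' x z :=
  have hsub : Icc x z ⊆ Icc a z := Icc_subset_Icc_left hx.1
  { lt := hx.2
    hasDeriv := fun u hu => (hf.hasDeriv u (hsub hu)).mono hsub
    hasDeriv2 := fun u hu => (hf.hasDeriv2 u (hsub hu)).mono hsub
    deriv2_pos := hf.deriv2_pos.trans_le (hf.deriv2_le x (Ico_subset_Icc_self hx))
    monotoneOn := hf.monotoneOn.mono hsub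
    convexOn := hf.convexOn.subset hsub (convex_Icc x z)
    root := hf.root
    deriv_root_neg := hf.deriv_root_neg }

lemma deriv_add_le (hf : IsHalleyMajorant f f' f'' a z) :
    ∀ u ∈ Icc a z, f' a + f'' a * (u - a) ≤ f' u :=
  image_le_of_hasDerivWithinAt_le
    (fun u _ => (hasDerivAt_affine_sub _ _ a u).hasDerivWithinAt) hf.hasDeriv2 (by simp)
    hf.deriv2_le

lemma deriv_left_le (hf : IsHalleyMajorant f f' f'' a z) (hx : x ∈ Icc a z) : f' a ≤ f' x := by
  linarith [hf.deriv_add_le x hx, mul_nonneg hf.deriv2_pos.le (sub_nonneg.2 hx.1)]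

lemma deriv_le_root (hf : IsHalleyMajorant f f' f'' a z) : ∀ u ∈ Icc a z, f' u ≤ f' z := by
  intro u hu
  rcases hu.2.eq_or_lt with rfl | huz
  · rfl
  · exact (hf.restrict ⟨hu.1, huz⟩).deriv_left_le (right_mem_Icc.2 hu.2)

lemma deriv_neg (hf : IsHalleyMajorant f f' f'' a z) : f' a < 0 :=
  (hf.deriv_left_le (right_mem_Icc.2 hf.lt.le)).trans_lt hf.deriv_root_neg

lemma neg_deriv_root_mul_le (hf : IsHalleyMajorant f f' f'' a z) : -f' z * (z - a) ≤ f a := by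
  have htangent := image_le_of_hasDerivWithinAt_le hf.hasDeriv
    (fun u _ => (hasDerivAt_affine_sub (f a) (f' z) a u).hasDerivWithinAt) (by simp)
    hf.deriv_le_root z (right_mem_Icc.2 hf.lt.le)
  linarith [hf.root]

lemma le_quadratic (hf : IsHalleyMajorant f f' f'' a z) :
    f a ≤ -f' a * (z - a) - f'' a / 2 * (z - a) ^ 2 := by
  have htaylor := quadratic_le_of_le_deriv2 hf.hasDeriv hf.hasDeriv2 hf.deriv2_le z
    (right_mem_Icc.2 hf.lt.le)
  linarith [hf.root]

lemma quadratic_sub_le (hf : IsHalleyMajorant f f' f'' a z) :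
    -f' a * (z - a) - f'' a / 2 * (z - a) ^ 2 - (f'' z - f'' a) / 6 * (z - a) ^ 2 ≤ f a := by
  have htaylor := le_cubic_of_deriv2_le hf.hasDeriv hf.hasDeriv2
    (le_chord_of_convexOn_Icc hf.convexOn) z (right_mem_Icc.2 hf.lt.le)
  have hchord : (f'' z - f'' a) / (z - a) / 6 * (z - a) ^ 3 =
      (f'' z - f'' a) / 6 * (z - a) ^ 2 := by
    have := (sub_pos.2 hf.lt).ne'
    field_simp
  linarith [hf.root]

/-- With `e = z - a`, the slack is at least `(f' a + f'' a * e) ^ 2 / 2`. -/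
lemma three_halves_deriv_sq_le (hf : IsHalleyMajorant f f' f'' a z) :
    3 / 2 * f' a ^ 2 ≤ 2 * f' a ^ 2 - f a * f'' a := by
  linarith [mul_le_mul_of_nonneg_right hf.le_quadratic hf.deriv2_pos.le,
    sq_nonneg (f' a + f'' a * (z - a))]

lemma denom_pos (hf : IsHalleyMajorant f f' f'' a z) : 0 < 2 * f' a ^ 2 - f a * f'' a := by
  linarith [hf.three_halves_deriv_sq_le, sq_pos_of_neg hf.deriv_neg]

lemma root_sub_halleyMap_eq (hf : IsHalleyMajorant f f' f'' a z) :
    z - halleyMap f f' f'' a =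
      ((z - a) * (2 * f' a ^ 2 - f a * f'' a) + 2 * f a * f' a) /
        (2 * f' a ^ 2 - f a * f'' a) := by
  rw [halleyMap_eq_sub_div hf.deriv_neg.ne, add_div, mul_div_cancel_right₀ _ hf.denom_pos.ne']
  ring

lemma halleyMap_lt_root (hf : IsHalleyMajorant f f' f'' a z) : halleyMap f f' f'' a < z := by
  rw [← sub_pos, hf.root_sub_halleyMap_eq]
  refine div_pos ?_ hf.denom_pos
  have he : 0 < z - a := sub_pos.2 hf.lt
  have hb := hf.deriv2_pos
  have hp := neg_pos.2 hf.deriv_neg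
  -- With p = -f' a, b = f'' a, e = z - a: (p e - b e² / 2) (2 p + b e) = 2 p² e - b² e³ / 2.
  have hupper := mul_le_mul_of_nonneg_right hf.le_quadratic
    (show 0 ≤ 2 * -f' a + f'' a * (z - a) by positivity)
  have hgap : 0 < f'' a ^ 2 * (z - a) ^ 3 := by positivity
  linarith

lemma newton_le_halleyMap (hf : IsHalleyMajorant f f' f'' a z) :
    a - f a / f' a ≤ halleyMap f f' f'' a := by
  rw [halleyMap_eq_sub_div hf.deriv_neg.ne]
  refine sub_le_sub_left ?_ a
  rw [← neg_le_neg_iff, ← div_neg, ← neg_div, div_le_div_iff₀ (neg_pos.2 hf.deriv_neg) hf.denom_pos]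
  nlinarith [mul_nonneg (sq_nonneg (f a)) hf.deriv2_pos.le]

lemma mul_le_halleyMap_sub (hf : IsHalleyMajorant f f' f'' a z) :
    f' z / f' a * (z - a) ≤ halleyMap f f' f'' a - a := by
  calc f' z / f' a * (z - a) = -f' z * (z - a) / -f' a := by rw [← neg_div_neg_eq]; ring
    _ ≤ f a / -f' a :=
        div_le_div_of_nonneg_right hf.neg_deriv_root_mul_le (neg_pos.2 hf.deriv_neg).le
    _ ≤ halleyMap f f' f'' a - a := by
        rw [div_neg]
        linarith [hf.newton_le_halleyMap]

lemma lt_halleyMap (hf : IsHalleyMajorant f f' f'' a z) : a < halleyMap f f' f'' a := by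
  rw [← sub_pos]
  exact (mul_pos (div_pos_of_neg_of_neg hf.deriv_root_neg hf.deriv_neg)
    (sub_pos.2 hf.lt)).trans_le hf.mul_le_halleyMap_sub

lemma root_sub_halleyMap_le_residual (hf : IsHalleyMajorant f f' f'' a z) :
    z - halleyMap f f' f'' a ≤
      (f'' a ^ 2 / 2 * (z - a) ^ 3 +
        (f'' z - f'' a) / 6 * (z - a) ^ 2 * (2 * -f' a + f'' a * (z - a))) /
        (3 / 2 * f' a ^ 2) := by
  have he : 0 < z - a := sub_pos.2 hf.lt
  have hb := hf.deriv2_pos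
  have hp := neg_pos.2 hf.deriv_neg
  have hB : 0 ≤ f'' z - f'' a := sub_nonneg.2 (hf.deriv2_le z (right_mem_Icc.2 hf.lt.le))
  have hlower := mul_le_mul_of_nonneg_right hf.quadratic_sub_le
    (show 0 ≤ 2 * -f' a + f'' a * (z - a) by positivity)
  rw [hf.root_sub_halleyMap_eq]
  refine div_le_div₀ (by positivity) ?_ (by have := sq_pos_of_neg hf.deriv_neg; positivity)
    hf.three_halves_deriv_sq_le
  linarith

lemma two_mul_deriv_add_div_le (hf : IsHalleyMajorant f f' f'' a z) :
    (2 * -f' a + f'' a * (z - a)) / (2 * f' a ^ 2) ≤ 1 / -f' z := by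
  have he : 0 < z - a := sub_pos.2 hf.lt
  have hb := hf.deriv2_pos
  have hp := neg_pos.2 hf.deriv_neg
  rw [div_le_div_iff₀ (mul_pos two_pos (sq_pos_of_neg hf.deriv_neg))
    (neg_pos.2 hf.deriv_root_neg)]
  have hslope := mul_le_mul_of_nonneg_left
    (neg_le_neg (hf.deriv_add_le z (right_mem_Icc.2 hf.lt.le)))
    (show 0 ≤ 2 * -f' a + f'' a * (z - a) by positivity)
  have hcross : 0 ≤ -f' a * (f'' a * (z - a)) := by positivity
  linarith [sq_nonneg (f'' a * (z - a))]

lemma root_sub_halleyMap_le (hf : IsHalleyMajorant f f' f'' a z) {S : ℝ}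
    (hS : f'' z - f'' a ≤ S * (z - a)) :
    z - halleyMap f f' f'' a ≤
      (1 / 3 * (f'' z ^ 2 / f' z ^ 2) + 2 / 9 * (S / -f' z)) * (z - a) ^ 3 := by
  have he : 0 < z - a := sub_pos.2 hf.lt
  have hb := hf.deriv2_pos
  have hA := neg_pos.2 hf.deriv_root_neg
  have hz : z ∈ Icc a z := right_mem_Icc.2 hf.lt.le
  have hB : 0 ≤ f'' z - f'' a := sub_nonneg.2 (hf.deriv2_le z hz)
  have hquot : f'' a ^ 2 / f' a ^ 2 ≤ f'' z ^ 2 / f' z ^ 2 := by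
    rw [← neg_sq (f' a), ← neg_sq (f' z)]
    have := hf.deriv2_le z hz
    have := hf.deriv_left_le hz
    gcongr
  have hjump : (f'' z - f'' a) * ((2 * -f' a + f'' a * (z - a)) / (2 * f' a ^ 2)) ≤
      S * (z - a) * (1 / -f' z) := by
    calc _ ≤ (f'' z - f'' a) * (1 / -f' z) :=
          mul_le_mul_of_nonneg_left hf.two_mul_deriv_add_div_le hB
      _ ≤ S * (z - a) * (1 / -f' z) := by gcongr
  calc z - halleyMap f f' f'' a
      ≤ _ := hf.root_sub_halleyMap_le_residual
    _ = 1 / 3 * (f'' a ^ 2 / f' a ^ 2) * (z - a) ^ 3 + 2 / 9 *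
        ((f'' z - f'' a) * ((2 * -f' a + f'' a * (z - a)) / (2 * f' a ^ 2))) * (z - a) ^ 2 := by
        have := hf.deriv_neg.ne
        field_simp
        ring
    _ ≤ 1 / 3 * (f'' z ^ 2 / f' z ^ 2) * (z - a) ^ 3 +
        2 / 9 * (S * (z - a) * (1 / -f' z)) * (z - a) ^ 2 := by gcongr
    _ = (1 / 3 * (f'' z ^ 2 / f' z ^ 2) + 2 / 9 * (S / -f' z)) * (z - a) ^ 3 := by ring

lemma mem_Ico_of_halley_iterate (hf : IsHalleyMajorant f f' f'' a z) {t : ℕ → ℝ}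
    (ht : t 0 ∈ Ico a z) (hrec : ∀ k, t (k + 1) = halleyMap f f' f'' (t k)) (k : ℕ) :
    t k ∈ Ico a z := by
  induction k with
  | zero => exact ht
  | succ k ih =>
    have hk := hf.restrict ih
    rw [hrec]
    exact ⟨ih.1.trans hk.lt_halleyMap.le, hk.halleyMap_lt_root⟩

lemma uniform_mul_le_halleyMap_sub (hf : IsHalleyMajorant f f' f'' a z) (hx : x ∈ Ico a z) :
    f' z / f' a * (z - x) ≤ halleyMap f f' f'' x - x := by
  have hfx := hf.restrict hx
  refine (mul_le_mul_of_nonneg_right ?_ (sub_pos.2 hx.2).le).trans hfx.mul_le_halleyMap_sub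
  rw [← neg_div_neg_eq, ← neg_div_neg_eq (f' z)]
  exact div_le_div_of_nonneg_left (neg_pos.2 hf.deriv_root_neg).le (neg_pos.2 hfx.deriv_neg)
    (neg_le_neg (hf.deriv_left_le (Ico_subset_Icc_self hx)))

end IsHalleyMajorant

theorem halley_majorizing_sequence_converges_cubically_general
    {a R z : ℝ} {f f' f'' : ℝ → ℝ}
    (hf : ∀ u ∈ Ico a R, HasDerivWithinAt f (f' u) (Ico a R) u)
    (hf' : ∀ u ∈ Ico a R, HasDerivWithinAt f' (f'' u) (Ico a R) u)
    (hpos : 0 < f'' a) (hmono : MonotoneOn f'' (Ico a R)) (hconv : ConvexOn ℝ (Ico a R) f'')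
    (hz : z ∈ Ioo a R) (hroot : f z = 0) (hneg : f' z < 0)
    {t : ℕ → ℝ} (ht : t 0 ∈ Ico a z) (hrec : ∀ k, t (k + 1) = halleyMap f f' f'' (t k)) :
    StrictMono t ∧ (∀ k, t k ∈ Ico a z) ∧ Tendsto t atTop (𝓝 z) ∧
    ∀ k, z - t (k + 1) ≤
      (1 / 3 * (f'' z ^ 2 / f' z ^ 2) + 2 / 9 * (leftSlopeSup f'' a z / -f' z)) *
        (z - t k) ^ 3 := by
  have hmaj := IsHalleyMajorant.of_Ico hf hf' hpos hmono hconv hz hroot hneg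
  have hmem := hmaj.mem_Ico_of_halley_iterate ht hrec
  refine ⟨strictMono_nat_of_lt_succ fun k => ?_, hmem, ?_, fun k => ?_⟩
  · exact hrec k ▸ (hmaj.restrict (hmem k)).lt_halleyMap
  · exact tendsto_of_mul_sub_le_sub (div_pos_of_neg_of_neg hneg hmaj.deriv_neg)
      (fun k => (hmem k).2.le) fun k => hrec k ▸ hmaj.uniform_mul_le_halleyMap_sub (hmem k)
  · exact hrec k ▸ (hmaj.restrict (hmem k)).root_sub_halleyMap_le
      (sub_le_leftSlopeSup_mul hconv hz.2 (hmem k))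

/-- Under (A1)-(A3), the scalar Halley sequence `t_0 = 0`,
`t_{k+1} = H_h(t_k) = t_k - (1/(1 - L_h(t_k)))·(h(t_k)/h'(t_k))` is well defined,
strictly increasing, contained in `[0,t*)`, converges to `t*`, and satisfies the
Q-cubic estimate
`t* - t_{k+1} ≤ [(1/3)·h''(t*)²/h'(t*)² + (2/9)·D⁻h''(t*)/(-h'(t*))]·(t* - t_k)³`.
Here `h1` and `h2` denote the first and second derivatives of `h` on `[0,R)`,
and `tstar` is the smallest zero of `h` in `(0,R)`. -/
theorem halley_majorizing_sequence_converges_cubically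
    (R : ℝ) (hR : 0 < R) (h h1 h2 : ℝ → ℝ)
    (hd1 : ∀ t ∈ Set.Ico (0:ℝ) R, HasDerivWithinAt h (h1 t) (Set.Ico 0 R) t)
    (hd2 : ∀ t ∈ Set.Ico (0:ℝ) R, HasDerivWithinAt h1 (h2 t) (Set.Ico 0 R) t)
    (hc2 : ContinuousOn h2 (Set.Ico 0 R))
    (hA1a : 0 < h 0) (hA1b : 0 < h2 0) (hA1c : h1 0 = -1)
    (hA2a : ConvexOn ℝ (Set.Ico 0 R) h2)
    (hA2b : StrictMonoOn h2 (Set.Ico 0 R))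
    (tstar : ℝ) (htsmem : tstar ∈ Set.Ioo 0 R) (htszero : h tstar = 0)
    (htsmin : ∀ t ∈ Set.Ioo (0:ℝ) R, h t = 0 → tstar ≤ t)
    (htsder : h1 tstar < 0)
    (t : ℕ → ℝ) (ht0 : t 0 = 0)
    (hrec : ∀ k, t (k + 1) =
      t k - (1 / (1 - h (t k) * h2 (t k) / (2 * (h1 (t k)) ^ 2))) * (h (t k) / h1 (t k))) :
    StrictMono t ∧ (∀ k, t k ∈ Set.Ico (0:ℝ) tstar) ∧
    Filter.Tendsto t Filter.atTop (nhds tstar) ∧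
    ∀ k, tstar - t (k + 1) ≤
      ((1 / 3) * ((h2 tstar) ^ 2 / (h1 tstar) ^ 2) +
        (2 / 9) * (sSup ((fun u => (h2 tstar - h2 u) / (tstar - u)) ''
          Set.Ico (0:ℝ) tstar) / (-(h1 tstar)))) * (tstar - t k) ^ 3 := 
  halley_majorizing_sequence_converges_cubically_general hd1 hd2 hA1b hA2b.monotoneOn hA2a
    htsmem htszero htsder (ht0.symm ▸ left_mem_Ico.2 htsmem.1) hrec
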